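/- arXiv:1403.0547 — 8 statements merged into one kernel-verified Lean document; each statement's English description precedes it below -/
import Mathlib

section
/- Let I ≥ 2 be an integer, t ∈ [0,1], and a = (a_1,…,a_I) a real vector satisfying t·max_i a_i − min_i a_i ≤ 1, and suppose 2 + (1−t)(a_i + a_j) > 0 for all i,j. Then for all i ≠ j the factor 1 + (1+t)(a_i − a_j)/(2 + (1−t)(a_i + a_j)) lies in the interval [0,2]. Consequently, if 0 ≤ s_{ij} ≤ 1/2, then p_{ij} = s_{ij}·(1 + (1+t)(a_i − a_j)/(2 + (1−t)(a_i + a_j))) lies in [0,1]. -/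
/-- Under the constraint t·max_i a_i − min_i a_i ≤ 1 and positivity
of the denominators, the QS_t factor lies in [0,2]; hence if 0 ≤ s ≤ 1/2 the
resulting cell probability lies in [0,1]. -/
theorem qs_t_factor_in_Icc (I : ℕ) (hI : 2 ≤ I) (t : ℝ)
    (ht : t ∈ Set.Icc (0 : ℝ) 1)
    (a : Fin I → ℝ)
    (hmaxmin :
      t * Finset.univ.sup' (Finset.univ_nonempty_iff.mpr ⟨⟨0, by omega⟩⟩) a
        - Finset.univ.inf' (Finset.univ_nonempty_iff.mpr ⟨⟨0, by omega⟩⟩) a ≤ 1)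
    (hden : ∀ i j : Fin I, 0 < 2 + (1 - t) * (a i + a j)) :
    (∀ i j : Fin I, i ≠ j →
      1 + (1 + t) * (a i - a j) / (2 + (1 - t) * (a i + a j)) ∈ Set.Icc (0 : ℝ) 2) ∧
    (∀ i j : Fin I, i ≠ j → ∀ s : ℝ, 0 ≤ s → s ≤ 1 / 2 →
      s * (1 + (1 + t) * (a i - a j) / (2 + (1 - t) * (a i + a j))) ∈ Set.Icc (0 : ℝ) 1) := by
  obtain ⟨ht0, ht1⟩ := ht
  have key : ∀ i j : Fin I, t * a j - a i ≤ 1 := by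
    intro i j
    have h1 := Finset.le_sup' a (Finset.mem_univ j)
    have h2 := Finset.inf'_le a (Finset.mem_univ i)
    have h3 := mul_le_mul_of_nonneg_left h1 ht0
    linarith
  have main : ∀ i j : Fin I,
      0 ≤ 1 + (1 + t) * (a i - a j) / (2 + (1 - t) * (a i + a j)) ∧
      1 + (1 + t) * (a i - a j) / (2 + (1 - t) * (a i + a j)) ≤ 2 := by
    intro i j
    have hd := hden i j
    have h1 := key i j
    have h2 := key j i
    have l : -1 ≤ (1 + t) * (a i - a j) / (2 + (1 - t) * (a i + a j)) := by
      rw [le_div_iff₀ hd]; nlinarith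
    have u : (1 + t) * (a i - a j) / (2 + (1 - t) * (a i + a j)) ≤ 1 := by
      rw [div_le_iff₀ hd]; nlinarith
    constructor <;> linarith
  refine ⟨fun i j _ => main i j, fun i j _ s hs0 hs1 => ?_⟩
  obtain ⟨h0, h2⟩ := main i j
  refine ⟨mul_nonneg hs0 h0, ?_⟩
  calc _ ≤ (1 / 2 : ℝ) * 2 := mul_le_mul hs1 h2 h0 (by norm_num)
    _ = 1 := by norm_num
end

section
/- Let I ≥ 2 and let x = (x_{ij}) be a symmetric I×I real matrix with all entries nonnegative and with x_{iI} > 0 for i = 1,…,I−1. Define the I×I matrix B by B_{ij} = x_{ij} for i ≠ j and B_{ii} = x_{ii} − x_{i+}, where x_{i+} = Σ_j x_{ij}. Then the kernel of B (acting on column vectors a ∈ ℝ^I by a ↦ B·a) is exactly the one-dimensional span of the all-ones vector; equivalently, B has rank I − 1 and B·a = 0 implies a_1 = a_2 = … = a_I. -/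
theorem max_le_last (n : ℕ) (x : Fin (n + 1) → Fin (n + 1) → ℝ)
    (hnonneg : ∀ i j, 0 ≤ x i j)
    (hpos : ∀ i : Fin (n + 1), i ≠ Fin.last n → 0 < x i (Fin.last n))
    (a : Fin (n + 1) → ℝ) (h : ∀ i, ∑ j, x i j * (a i - a j) = 0) (k : Fin (n + 1)) :
    a k ≤ a (Fin.last n) := by
  obtain ⟨i, hi⟩ := Finite.exists_max a
  refine (hi k).trans ?_
  by_cases hl : i = Fin.last n
  · rw [hl]
  have h0 := (Finset.sum_eq_zero_iff_of_nonneg (fun j _ =>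
    mul_nonneg (hnonneg i j) (sub_nonneg.2 (hi j)))).1 (h i) (Fin.last n) (Finset.mem_univ _)
  rcases mul_eq_zero.1 h0 with h1 | h1
  · exact absurd h1 (hpos i hl).ne'
  · linarith

/-- For a nonnegative symmetric matrix x with positive off-diagonal
entries in the last column, the matrix B = x − diag(x·1) has kernel exactly the
span of the all-ones vector, and rank I − 1. -/
theorem kernel_of_B_is_span_ones (n : ℕ) (hn : 1 ≤ n)
    (x : Fin (n + 1) → Fin (n + 1) → ℝ)
    (hsymm : ∀ i j, x i j = x j i)
    (hnonneg : ∀ i j, 0 ≤ x i j)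
    (hpos : ∀ i : Fin (n + 1), i ≠ Fin.last n → 0 < x i (Fin.last n))
    (B : Matrix (Fin (n + 1)) (Fin (n + 1)) ℝ)
    (hB : ∀ i j, B i j = if i = j then x i i - ∑ k, x i k else x i j) :
    (∀ a : Fin (n + 1) → ℝ, B.mulVec a = 0 ↔ ∃ c : ℝ, ∀ i, a i = c) ∧
      B.rank = n := by
  have hmul : ∀ a : Fin (n + 1) → ℝ, ∀ i, B.mulVec a i = -∑ j, x i j * (a i - a j) := by
    intro a i
    have hB' : ∀ j, B i j * a j = x i j * a j - if i = j then (∑ k, x i k) * a j else 0 := by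
      intro j
      rw [hB]
      split_ifs with hij
      · subst hij; ring
      · ring
    simp only [Matrix.mulVec, dotProduct, hB', mul_sub, Finset.sum_sub_distrib,
      Finset.sum_ite_eq, Finset.mem_univ, if_true, Finset.sum_mul]
    ring
  have key : ∀ a : Fin (n + 1) → ℝ, B.mulVec a = 0 ↔ ∃ c : ℝ, ∀ i, a i = c := by
    intro a
    constructor
    · intro h
      have h1 : ∀ i, ∑ j, x i j * (a i - a j) = 0 := by
        intro i
        have := congrFun h i
        rw [hmul] at this
        simpa using this
      have h2 : ∀ i, ∑ j, x i j * ((-a) i - (-a) j) = 0 := by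
        intro i
        rw [← neg_eq_zero, ← Finset.sum_neg_distrib, ← h1 i]
        refine Finset.sum_congr rfl fun j _ => ?_
        simp only [Pi.neg_apply]
        ring
      refine ⟨a (Fin.last n), fun i => le_antisymm (max_le_last n x hnonneg hpos a h1 i) ?_⟩
      have := max_le_last n x hnonneg hpos (-a) h2 i
      simpa using this
    · rintro ⟨c, hc⟩
      ext i
      rw [hmul]
      simp [hc]
  refine ⟨key, ?_⟩
  have hker : LinearMap.ker B.mulVecLin = Submodule.span ℝ {(fun _ => 1 : Fin (n + 1) → ℝ)} := by
    ext a
    rw [LinearMap.mem_ker, Matrix.mulVecLin_apply, key, Submodule.mem_span_singleton]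
    refine exists_congr fun c => ?_
    rw [funext_iff]
    simp [eq_comm]
  have hr := LinearMap.finrank_range_add_finrank_ker B.mulVecLin
  have hne : (fun _ => 1 : Fin (n + 1) → ℝ) ≠ 0 := fun h => one_ne_zero (congrFun h 0)
  rw [hker, finrank_span_singleton hne] at hr
  simp only [Module.finrank_fin_fun] at hr
  unfold Matrix.rank
  omega
end

section
/- (Proposition 1: S = MH ∩ QS_t.) Let I ≥ 2, t ∈ [0,1], let x = (x_{ij}) be a symmetric I×I real matrix with x_{ij} > 0 for all i ≠ j and x_{ii} ≥ 0, with Σ_{i,j} x_{ij} = 1, and let a = (a_1,…,a_I) be a real vector satisfying Σ_{i=1}^I (x_{i+} − x_{ii}) a_i = 0. Define p_{ii} = x_{ii} and p_{ij} = x_{ij}(1 + a_i − t·a_j) for i ≠ j. If p satisfies marginal homogeneity, i.e. p_{i+} = p_{+i} for all i = 1,…,I, then a_1 = a_2 = … = a_I and p_{ij} = x_{ij} for all i,j; in particular p is a symmetric matrix. Conversely, if a_1 = … = a_I = 0 then p = x is symmetric and marginally homogeneous. -/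
/-- Proposition 1: S = MH ∩ QS_t: Under the QS_t parametrization
in x-form with positive off-diagonal x-entries and the weighted-sum-to-zero
constraint, marginal homogeneity forces all a_i to be equal and p = x (so p is
symmetric); conversely a ≡ 0 yields a symmetric, marginally homogeneous p = x. -/
theorem symmetry_eq_MH_inter_QS_t (I : ℕ) (hI : 2 ≤ I) (t : ℝ)
    (ht : t ∈ Set.Icc (0 : ℝ) 1)
    (x : Fin I → Fin I → ℝ)
    (hsymm : ∀ i j, x i j = x j i)
    (hpos : ∀ i j, i ≠ j → 0 < x i j)
    (hdiag : ∀ i, 0 ≤ x i i)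
    (hsum : ∑ i, ∑ j, x i j = 1)
    (a : Fin I → ℝ)
    (hconstr : ∑ i, ((∑ j, x i j) - x i i) * a i = 0)
    (p : Fin I → Fin I → ℝ)
    (hp : ∀ i j, p i j = if i = j then x i i else x i j * (1 + a i - t * a j)) :
    ((∀ i, (∑ j, p i j) = ∑ j, p j i) →
      (∀ i j, a i = a j) ∧ (∀ i j, p i j = x i j) ∧ (∀ i j, p i j = p j i)) ∧
    ((∀ i, a i = 0) →
      (∀ i j, p i j = x i j) ∧ (∀ i j, p i j = p j i) ∧
        ∀ i, (∑ j, p i j) = ∑ j, p j i) := by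
  obtain ⟨ht0, ht1⟩ := ht
  have key : (∀ i, a i = 0) →
      (∀ i j, p i j = x i j) ∧ (∀ i j, p i j = p j i) ∧
        ∀ i, (∑ j, p i j) = ∑ j, p j i := by
    intro h0
    have hpx : ∀ i j, p i j = x i j := by
      intro i j
      rw [hp]
      split_ifs with h
      · rw [h]
      · simp [h0]
    have hs : ∀ i j, p i j = p j i := by
      intro i j
      rw [hpx, hpx, hsymm]
    exact ⟨hpx, hs, fun i => Finset.sum_congr rfl fun j _ => hs i j⟩
  refine ⟨fun hMH => ?_, key⟩
  haveI : Nonempty (Fin I) := ⟨⟨0, by omega⟩⟩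
  obtain ⟨m, hm⟩ := Finite.exists_max a
  have hdiff : ∀ j, p m j - p j m = x m j * ((1 + t) * (a m - a j)) := by
    intro j
    rw [hp, hp]
    by_cases h : m = j
    · subst h
      simp
    · rw [if_neg h, if_neg (Ne.symm h), hsymm j m]
      ring
  have hx0 : ∀ i j, 0 ≤ x i j := by
    intro i j
    by_cases h : i = j
    · rw [← h]
      exact hdiag i
    · exact (hpos i j h).le
  have hz : ∑ j, x m j * ((1 + t) * (a m - a j)) = 0 := by
    rw [← Finset.sum_congr rfl fun j _ => hdiff j, Finset.sum_sub_distrib, hMH m, sub_self]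
  rw [Finset.sum_eq_zero_iff_of_nonneg (fun j _ => mul_nonneg (hx0 m j)
    (mul_nonneg (by linarith) (sub_nonneg.2 (hm j))))] at hz
  have heq : ∀ j, a j = a m := by
    intro j
    by_cases h : m = j
    · rw [h]
    · rcases mul_eq_zero.1 (hz j (Finset.mem_univ j)) with h1 | h1
      · exact absurd h1 (hpos m j h).ne'
      · rcases mul_eq_zero.1 h1 with h2 | h2
        · linarith
        · linarith
  have hrow : ∀ i, 0 < (∑ j, x i j) - x i i := by
    intro i
    rw [← Finset.add_sum_erase _ _ (Finset.mem_univ i), add_sub_cancel_left]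
    haveI : Nontrivial (Fin I) := Fin.nontrivial_iff_two_le.2 hI
    obtain ⟨k, hk⟩ := exists_ne i
    exact Finset.sum_pos (fun j hj => hpos i j (Finset.ne_of_mem_erase hj).symm)
      ⟨k, Finset.mem_erase.2 ⟨hk, Finset.mem_univ k⟩⟩
  have hc : a m = 0 := by
    rw [Finset.sum_congr rfl fun i _ => by rw [heq i], ← Finset.sum_mul] at hconstr
    rcases mul_eq_zero.1 hconstr with h | h
    · exact absurd h (Finset.sum_pos (fun i _ => hrow i) Finset.univ_nonempty).ne'
    · exact h
  obtain ⟨h1, h2, _⟩ := key fun i => (heq i).trans hc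
  exact ⟨fun i j => (heq i).trans (heq j).symm, h1, h2⟩
end

section
/- Let C be an n-cycle (n ≥ 3) with distinct vertices v_1,…,v_n, and let P^C be its cycle polynomial, a polynomial with coefficients in ℚ[t] in the variables p_{ij} for directed edges (i,j) of C. Then substituting p_{ij} = x_{ij}(1 + a_i − t·a_j), where the x_{ij} are indeterminates subject to x_{ij} = x_{ji} and the a_i are indeterminates, yields the zero polynomial in ℚ[t][x_{ij}, a_i]. In other words, every cycle polynomial P^C is a polynomial relation among the QS_t model coordinates. -/
/-- Cyclic successor on `Fin n`. -/
def cycSucc {n : ℕ} (k : Fin n) : Fin n :=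
  ⟨(k.val + 1) % n, Nat.mod_lt _ k.pos⟩

/-- The coefficient `coeff(δ) ∈ R` (with `t ∈ R`) attached to an orientation
`δ` of the `n`-cycle, encoded as `δ : Fin n → Bool` where `δ k = true` means the
`k`-th edge is oriented in agreement with the distinguished directed cycle. -/
noncomputable def cycleCoeff {R : Type*} [CommRing R] (t : R) {n : ℕ}
    (δ : Fin n → Bool) : R :=
  let c : ℤ := 2 * ((Finset.univ.filter fun k => δ k = true).card : ℤ) - (n : ℤ)
  if c = 0 then 0
  else (if 0 < c then 1 else -1) *
    (if n % 2 = 0 then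
      ∑ m ∈ Finset.range (c.natAbs / 2), t ^ ((n - c.natAbs) / 2 + 2 * m)
    else
      ∑ m ∈ Finset.range c.natAbs, t ^ ((n - c.natAbs) / 2 + m))

/-- The cycle polynomial `P^C = Σ_δ coeff(δ)·p^δ` of the `n`-cycle with vertices
`v 0, …, v (n-1)`, evaluated at `t : R` and coordinates `p : V → V → R`. -/
noncomputable def cyclePoly {R : Type*} [CommRing R] {V : Type*} (t : R) (n : ℕ)
    (v : Fin n → V) (p : V → V → R) : R :=
  ∑ δ : Fin n → Bool, cycleCoeff t δ *
    ∏ k : Fin n, if δ k then p (v k) (v (cycSucc k)) else p (v (cycSucc k)) (v k)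

theorem cycleCoeff_mul {S : Type*} [CommRing S] (T : S) {n : ℕ} (δ : Fin n → Bool) :
    (if n % 2 = 0 then T ^ 2 - 1 else T - 1) * cycleCoeff T δ =
      T ^ (Finset.univ.filter fun k => δ k = true).card -
      T ^ (Finset.univ.filter fun k => ¬ δ k = true).card := by
  have hcard := Finset.card_filter_add_card_filter_not (s := (Finset.univ : Finset (Fin n)))
    (fun k => δ k = true)
  rw [Finset.card_univ, Fintype.card_fin] at hcard
  unfold cycleCoeff
  generalize (Finset.univ.filter fun k => δ k = true).card = j at *
  generalize (Finset.univ.filter fun k => ¬ δ k = true).card = l at *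
  subst hcard
  have geo : ∀ (y : S) (m : ℕ), (y - 1) * ∑ i ∈ Finset.range m, y ^ i = y ^ m - 1 :=
    fun y m => by rw [mul_comm]; exact geom_sum_mul y m
  have key : ∀ p q d : ℕ, q = p + d →
      (if (p + q) % 2 = 0 then T ^ 2 - 1 else T - 1) *
      (if (p + q) % 2 = 0 then
        ∑ m ∈ Finset.range (d / 2), T ^ (p + 2 * m)
      else ∑ m ∈ Finset.range d, T ^ (p + m)) = T ^ q - T ^ p := by
    intro p q d hq
    subst hq
    split_ifs with h
    · obtain ⟨e, rfl⟩ : ∃ e, d = 2 * e := ⟨d / 2, by omega⟩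
      simp only [pow_add, pow_mul, ← Finset.mul_sum]
      rw [show 2 * e / 2 = e by omega]
      linear_combination T ^ p * geo (T ^ 2) e
    · simp only [pow_add, ← Finset.mul_sum]
      linear_combination T ^ p * geo T d
  rcases lt_trichotomy j l with h | h | h
  · have h1 : (2 * (j : ℤ) - ((j + l : ℕ) : ℤ)).natAbs = l - j := by omega
    have h2 : ¬ (2 * (j : ℤ) - ((j + l : ℕ) : ℤ) = 0) := by omega
    have h3 : ¬ (0 < 2 * (j : ℤ) - ((j + l : ℕ) : ℤ)) := by omega
    have h4 : (j + l - (l - j)) / 2 = j := by omega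
    simp only [h1, h2, h3, h4, if_false]
    linear_combination - key j l (l - j) (by omega)
  · subst h
    have h2 : (2 * (j : ℤ) - ((j + j : ℕ) : ℤ) = 0) := by omega
    simp only [h2, if_true, mul_zero, sub_self]
  · have h1 : (2 * (j : ℤ) - ((j + l : ℕ) : ℤ)).natAbs = j - l := by omega
    have h2 : ¬ (2 * (j : ℤ) - ((j + l : ℕ) : ℤ) = 0) := by omega
    have h3 : (0 < 2 * (j : ℤ) - ((j + l : ℕ) : ℤ)) := by omega
    have h4 : (j + l - (j - l)) / 2 = l := by omega
    have := key l j (j - l) (by omega)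
    rw [add_comm l j] at this
    simp only [h1, h2, h3, h4, if_false, if_true]
    linear_combination this

theorem sum_orient {S : Type*} [CommRing S] (n : ℕ) (F G : Fin n → S) :
    ∏ k, (F k + G k) = ∑ δ : Fin n → Bool, ∏ k, if δ k then F k else G k := by
  have := Finset.prod_univ_sum (fun _ : Fin n => (Finset.univ : Finset Bool))
    (fun k b => if b then F k else G k)
  rw [Fintype.piFinset_univ] at this
  rw [← this]
  simp only [Fintype.sum_bool, if_true, Bool.false_eq_true, if_false]

theorem orient_mul {S : Type*} [CommRing S] (T : S) (n : ℕ) (p q : Fin n → S) :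
    (if n % 2 = 0 then T ^ 2 - 1 else T - 1) *
      ∑ δ : Fin n → Bool, cycleCoeff T δ * ∏ k, (if δ k then p k else q k) =
    ∏ k, (T * p k + q k) - ∏ k, (p k + T * q k) := by
  rw [sum_orient, sum_orient, ← Finset.sum_sub_distrib, Finset.mul_sum]
  refine Finset.sum_congr rfl fun δ _ => ?_
  rw [← mul_assoc, cycleCoeff_mul, sub_mul]
  congr 1
  · rw [← Finset.prod_const, Finset.prod_filter, ← Finset.prod_mul_distrib]
    refine Finset.prod_congr rfl fun k _ => ?_
    split_ifs <;> simp
  · rw [← Finset.prod_const, Finset.prod_filter, ← Finset.prod_mul_distrib]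
    refine Finset.prod_congr rfl fun k _ => ?_
    split_ifs <;> simp

theorem map_cycleCoeff {S R : Type*} [CommRing S] [CommRing R] (φ : S →+* R) (T : S) {n : ℕ}
    (δ : Fin n → Bool) : φ (cycleCoeff T δ) = cycleCoeff (φ T) δ := by
  unfold cycleCoeff
  dsimp only
  split_ifs <;> simp

theorem cycSucc_bijective (n : ℕ) : Function.Bijective (cycSucc : Fin n → Fin n) := by
  refine Finite.injective_iff_bijective.mp fun i j h => ?_
  have h' : (i.val + 1) % n = (j.val + 1) % n := congrArg Fin.val h
  have h2 : i.val ≡ j.val [MOD n] := Nat.ModEq.add_right_cancel' 1 h'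
  exact Fin.ext (h2.eq_of_lt_of_lt i.2 j.2)

/-- Substituting the QS_t parametrization
`p_{ij} = x_{ij}(1 + a_i − t·a_j)` (with `x` symmetric) into the cycle
polynomial `P^C` of any `n`-cycle (n ≥ 3) yields zero identically; this is
stated over an arbitrary commutative ring, i.e. as a polynomial identity. -/
theorem cyclePoly_vanishes_on_qs_t (R : Type*) [CommRing R] (V : Type*)
    (n : ℕ) (hn : 3 ≤ n) (v : Fin n → V) (hv : Function.Injective v)
    (t : R) (x : V → V → R) (hsymm : ∀ i j, x i j = x j i) (a : V → R) :
    cyclePoly t n v (fun i j => x i j * (1 + a i - t * a j)) = 0 := by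
  classical
  let p : Fin n → Polynomial R := fun k => Polynomial.C (x (v k) (v (cycSucc k))) *
    (1 + Polynomial.C (a (v k)) - Polynomial.X * Polynomial.C (a (v (cycSucc k))))
  let q : Fin n → Polynomial R := fun k => Polynomial.C (x (v k) (v (cycSucc k))) *
    (1 + Polynomial.C (a (v (cycSucc k))) - Polynomial.X * Polynomial.C (a (v k)))
  have hz := orient_mul (Polynomial.X : Polynomial R) n p q
  let A : Fin n → Polynomial R := fun k =>
    1 + Polynomial.X + Polynomial.C (a (v k)) * (1 - Polynomial.X ^ 2)
  have e1 : ∏ k, (Polynomial.X * p k + q k) =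
      (∏ k, Polynomial.C (x (v k) (v (cycSucc k)))) * ∏ k, A (cycSucc k) := by
    rw [← Finset.prod_mul_distrib]
    refine Finset.prod_congr rfl fun k _ => ?_
    simp only [p, q, A]; ring
  have e2 : ∏ k, (p k + Polynomial.X * q k) =
      (∏ k, Polynomial.C (x (v k) (v (cycSucc k)))) * ∏ k, A k := by
    rw [← Finset.prod_mul_distrib]
    refine Finset.prod_congr rfl fun k _ => ?_
    simp only [p, q, A]; ring
  rw [e1, e2, (cycSucc_bijective n).prod_comp A, sub_self] at hz
  have hm : (if n % 2 = 0 then (Polynomial.X : Polynomial R) ^ 2 - 1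
      else Polynomial.X - 1).Monic := by
    split_ifs
    · simpa using Polynomial.monic_X_pow_sub_C (1 : R) (n := 2) (by norm_num)
    · simpa using Polynomial.monic_X_sub_C (1 : R)
  have h0 := (hm.mul_right_eq_zero_iff).mp hz
  have h1 := congrArg (Polynomial.evalRingHom t) h0
  rw [map_zero, map_sum] at h1
  rw [← h1]
  unfold cyclePoly
  refine Finset.sum_congr rfl fun δ _ => ?_
  rw [map_mul, map_cycleCoeff, map_prod]
  congr 1
  · simp
  · refine Finset.prod_congr rfl fun k _ => ?_
    split_ifs
    · simp [p, mul_comm t]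
    · simp [q, hsymm (v (cycSucc k)) (v k), mul_comm t]
end

section
/- (Markov basis of the classical QS model on a graph.) Let G be a finite undirected simple graph on vertex set {1,…,I}. Consider the ℚ-algebra homomorphism ψ from the polynomial ring ℚ[p_{ij}, p_{ji} : {i,j} ∈ E(G)] to the polynomial ring ℚ[x_e (e ∈ E(G)), c_1,…,c_I] sending p_{ij} ↦ x_{{i,j}}·c_i for each directed edge (i,j). Then the kernel of ψ (the toric ideal T_G of the classical quasisymmetry model on G) is generated by the binomials Π_{k=1}^n p_{v_k v_{k+1}} − Π_{k=1}^n p_{v_{k+1} v_k} (indices mod n), where v_1,…,v_n runs over all cycles of G (sequences of distinct vertices, n ≥ 3, with consecutive vertices adjacent in G, including {v_n,v_1} ∈ E(G)). -/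
namespace QS
set_option linter.unusedSectionVars false
set_option linter.unusedSimpArgs false
open MvPolynomial

variable {V : Type*} [Fintype V] [DecidableEq V]

theorem cycSucc_injective {n : ℕ} : Function.Injective (cycSucc (n := n)) := by
  intro a b h
  have h1 : (a.val + 1) % n = (b.val + 1) % n := congrArg Fin.val h
  have h2 : a.val ≡ b.val [MOD n] := Nat.ModEq.add_right_cancel' 1 h1
  have h3 := h2.eq_of_lt_of_lt a.isLt b.isLt
  exact Fin.ext h3

theorem sum_cycSucc {n : ℕ} {M : Type*} [AddCommMonoid M] (f : Fin n → M) :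
    ∑ k, f (cycSucc k) = ∑ k, f k :=
  Fintype.sum_bijective cycSucc (Finite.injective_iff_bijective.mp cycSucc_injective) _ _
    (fun _ => rfl)

/-- Existence of a simple directed cycle. -/
theorem exists_cycle {S : Type*} [Finite S] (x0 : S) (next : S → S)
    (h1 : ∀ x, next x ≠ x) (h2 : ∀ x, next (next x) ≠ x) :
    ∃ (n : ℕ) (_ : 3 ≤ n) (v : Fin n → S), Function.Injective v ∧
      ∀ k, v (cycSucc k) = next (v k) := by
  obtain ⟨a, b, hab, he⟩ := Finite.exists_ne_map_eq_of_infinite (fun k : ℕ => next^[k] x0)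
  wlog hlt : a < b generalizing a b
  · exact this b a hab.symm he.symm (by omega)
  set y := next^[a] x0 with hy
  have hper : Function.IsPeriodicPt next (b - a) y := by
    change next^[b - a] (next^[a] x0) = next^[a] x0
    rw [← Function.iterate_add_apply, Nat.sub_add_cancel hlt.le]
    exact he.symm
  have hpos : 0 < Function.minimalPeriod next y :=
    hper.minimalPeriod_pos (by omega)
  have hmp : next^[Function.minimalPeriod next y] y = y :=
    Function.isPeriodicPt_minimalPeriod next y
  refine ⟨Function.minimalPeriod next y, ?_, fun k => next^[k.val] y, ?_, ?_⟩
  · by_contra hlt3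
    have : Function.minimalPeriod next y = 1 ∨ Function.minimalPeriod next y = 2 := by omega
    rcases this with h | h
    · rw [h] at hmp; exact h1 y hmp
    · rw [h] at hmp; exact h2 y hmp
  · intro i j hij
    exact Fin.ext (Function.iterate_injOn_Iio_minimalPeriod i.isLt j.isLt hij)
  · intro k
    change next^[(k.val + 1) % _] y = next (next^[k.val] y)
    rw [Function.iterate_mod_minimalPeriod_eq, Function.iterate_succ_apply']

variable (G : SimpleGraph V)

/-- Directed edges. -/
abbrev D := {e : V × V // G.Adj e.1 e.2}

variable {G}

/-- Reversal of a directed edge. -/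
def rev (e : D G) : D G := ⟨(e.1.2, e.1.1), e.2.symm⟩

/-- Exponent of the image of a variable. -/
noncomputable def wt (e : D G) : (Sym2 V ⊕ V) →₀ ℕ :=
  Finsupp.single (Sum.inl s(e.1.1, e.1.2)) 1 + Finsupp.single (Sum.inr e.1.1) 1

/-- Exponent map. -/
noncomputable def A : (D G →₀ ℕ) →+ ((Sym2 V ⊕ V) →₀ ℕ) :=
  Finsupp.liftAddHom (fun e => (AddMonoidHom.flip (smulAddHom ℕ _)) (wt e))

theorem A_single (e : D G) (n : ℕ) : A (Finsupp.single e n) = n • wt e := by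
  simp [A]

theorem A_eq [DecidableRel G.Adj] (u : D G →₀ ℕ) : A u = ∑ e, u e • wt e := by
  simp [A, Finsupp.sum_fintype]

theorem A_inl [DecidableRel G.Adj] (u : D G →₀ ℕ) (e : D G) :
    A u (Sum.inl s(e.1.1, e.1.2)) = u e + u (rev e) := by
  have hne : e ≠ rev e := by
    intro h
    have := congrArg (fun x : D G => x.1.1) h
    exact e.2.ne this
  rw [A_eq, Finsupp.finsetSum_apply, ← Finset.sum_pair (f := u) hne]
  symm
  have : ∀ x ∈ ({e, rev e} : Finset (D G)),
      u x = (u x • wt x) (Sum.inl s(e.1.1, e.1.2)) := by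
    intro x hx
    simp only [Finset.mem_insert, Finset.mem_singleton] at hx
    rcases hx with rfl | rfl
    · simp [wt]
    · simp [wt, rev, Sym2.eq_swap]
  rw [Finset.sum_congr rfl this]
  apply Finset.sum_subset (Finset.subset_univ _)
  intro x _ hx
  simp only [Finset.mem_insert, Finset.mem_singleton, not_or] at hx
  have h3 : s(x.1.1, x.1.2) ≠ s(e.1.1, e.1.2) := by
    intro h
    rw [Sym2.eq_iff] at h
    rcases h with h | h
    · exact hx.1 (Subtype.ext (Prod.ext h.1 h.2))
    · exact hx.2 (Subtype.ext (Prod.ext h.1 h.2))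
  simp [wt, Finsupp.single_apply, h3]

theorem A_inr [DecidableRel G.Adj] (u : D G →₀ ℕ) (i : V) :
    A u (Sum.inr i) = ∑ e : D G, if e.1.1 = i then u e else 0 := by
  rw [A_eq, Finsupp.finsetSum_apply]
  refine Finset.sum_congr rfl fun e _ => ?_
  simp [wt, Finsupp.single_apply]

/-- Forward edges exponent of a cycle. -/
noncomputable def cyc {n : ℕ} (v : Fin n → V) (h : ∀ k, G.Adj (v k) (v (cycSucc k))) :
    D G →₀ ℕ := ∑ k, Finsupp.single ⟨(v k, v (cycSucc k)), h k⟩ 1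

/-- Backward edges exponent of a cycle. -/
noncomputable def cycR {n : ℕ} (v : Fin n → V) (h : ∀ k, G.Adj (v k) (v (cycSucc k))) :
    D G →₀ ℕ := ∑ k, Finsupp.single ⟨(v (cycSucc k), v k), (h k).symm⟩ 1

theorem A_cyc {n : ℕ} (v : Fin n → V) (h : ∀ k, G.Adj (v k) (v (cycSucc k))) :
    A (cyc v h) = A (cycR v h) := by
  simp only [cyc, cycR, map_sum, A_single, one_smul, wt, Finset.sum_add_distrib]
  congr 1
  · refine Finset.sum_congr rfl fun k _ => ?_
    rw [Sym2.eq_swap]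
  · exact (sum_cycSucc (fun k => Finsupp.single (Sum.inr (v k)) 1)).symm

theorem sum_single_le {α : Type*} {n : ℕ} (f : Fin n → α) (hf : Function.Injective f)
    (u : α →₀ ℕ) (hu : ∀ k, 0 < u (f k)) : ∑ k, Finsupp.single (f k) 1 ≤ u := by
  classical
  intro a
  rw [Finsupp.finsetSum_apply]
  by_cases ha : ∃ k, f k = a
  · obtain ⟨k, rfl⟩ := ha
    rw [Finset.sum_eq_single k]
    · simpa using Nat.succ_le_of_lt (hu k)
    · intro b _ hb
      simp [Finsupp.single_apply, hf.eq_iff, hb]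
    · simp
  · push Not at ha
    rw [Finset.sum_eq_zero]
    · simp
    · intro k _
      simp [Finsupp.single_apply, ha k]

theorem monomial_cyc {n : ℕ} {f : Fin n → D G} :
    (monomial (∑ k, Finsupp.single (f k) 1) (1 : ℚ)) = ∏ k, X (f k) := by
  rw [monomial_sum_one]; rfl

/-- Combinatorial heart. -/
theorem binomial_mem [DecidableRel G.Adj] (J : Ideal (MvPolynomial (D G) ℚ))
    (hJ : ∀ (n : ℕ) (_ : 3 ≤ n) (v : Fin n → V) (_ : Function.Injective v)
      (h : ∀ k, G.Adj (v k) (v (cycSucc k))),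
      monomial (cyc v h) (1 : ℚ) - monomial (cycR v h) 1 ∈ J) :
    ∀ (N : ℕ) (u w : D G →₀ ℕ), u.degree = N → A u = A w →
      monomial u (1 : ℚ) - monomial w 1 ∈ J := by
  intro N
  induction N using Nat.strong_induction_on with
  | _ N ih =>
  intro u w hN hA
  -- a reduction step
  have key : ∀ c d : D G →₀ ℕ, c ≤ u → d ≤ w → c ≠ 0 → A c = A d →
      monomial c (1 : ℚ) - monomial d 1 ∈ J → monomial u (1 : ℚ) - monomial w 1 ∈ J := by
    intro c d hc hd hc0 hcd hmem
    obtain ⟨u', rfl⟩ := exists_add_of_le hc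
    obtain ⟨w', rfl⟩ := exists_add_of_le hd
    have hA' : A u' = A w' := by
      rw [map_add, map_add, hcd] at hA
      exact add_left_cancel hA
    have hcpos : 0 < c.degree := by
      rw [Nat.pos_iff_ne_zero]
      intro h
      exact hc0 ((Finsupp.degree_eq_zero_iff c).mp h)
    have hdeg : u'.degree < N := by
      rw [map_add] at hN; omega
    have h1 := ih _ hdeg u' w' rfl hA'
    have e1 : ∀ a b : D G →₀ ℕ, monomial (a + b) (1 : ℚ) = monomial a 1 * monomial b 1 := by
      intro a b; rw [monomial_mul, one_mul]
    have : monomial (c + u') (1 : ℚ) - monomial (d + w') 1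
        = monomial u' 1 * (monomial c 1 - monomial d 1)
          + monomial d 1 * (monomial u' 1 - monomial w' 1) := by
      rw [e1, e1]; ring
    rw [this]
    exact J.add_mem (J.mul_mem_left _ hmem) (J.mul_mem_left _ h1)
  by_cases hcom : ∃ e, 0 < u e ∧ 0 < w e
  · obtain ⟨e, h1, h2⟩ := hcom
    exact key (Finsupp.single e 1) (Finsupp.single e 1) (by simpa using Nat.succ_le_of_lt h1)
      (by simpa using Nat.succ_le_of_lt h2)
      (by simp) rfl (by simp)
  · push Not at hcom
    have hinl : ∀ e, u e + u (rev e) = w e + w (rev e) := by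
      intro e; rw [← A_inl, ← A_inl, hA]
    have hrev : ∀ e, w (rev e) = u e := by
      intro e
      have := hinl e
      have := hcom e
      have := hcom (rev e)
      omega
    have hasym : ∀ e, 0 < u e → u (rev e) = 0 := by
      intro e he
      have := hinl e
      have := hcom e he
      have := hrev e
      omega
    by_cases hu : ∃ e, 0 < u e
    · have hnext : ∀ x : {i : V // ∃ e : D G, e.1.1 = i ∧ 0 < u e},
          ∃ y : {i : V // ∃ e : D G, e.1.1 = i ∧ 0 < u e},
            ∃ h : G.Adj x.1 y.1, 0 < u ⟨(x.1, y.1), h⟩ := by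
        rintro ⟨i, e, rfl, he⟩
        have hs : A u (Sum.inr e.1.2) = A w (Sum.inr e.1.2) := by rw [hA]
        rw [A_inr, A_inr] at hs
        have hle : w (rev e) ≤ ∑ f : D G, if f.1.1 = e.1.2 then w f else 0 := by
          have := Finset.single_le_sum (f := fun f : D G => if f.1.1 = e.1.2 then w f else 0)
            (s := Finset.univ) (fun _ _ => Nat.zero_le _) (Finset.mem_univ (rev e))
          simpa [rev] using this
        rw [hrev] at hle
        have hne : ∑ f : D G, (if f.1.1 = e.1.2 then u f else 0) ≠ 0 := by omega
        obtain ⟨f, _, hf⟩ := Finset.exists_ne_zero_of_sum_ne_zero hne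
        have hf1 : f.1.1 = e.1.2 := by
          by_contra h; simp [h] at hf
        have hf2 : 0 < u f := by
          simp [hf1] at hf; omega
        exact ⟨⟨e.1.2, f, hf1, hf2⟩, e.2, he⟩
      choose next hadj hpos using hnext
      obtain ⟨e0, he0⟩ := hu
      obtain ⟨n, hn, v, hv, hsucc⟩ := exists_cycle ⟨e0.1.1, e0, rfl, he0⟩ next
        (fun x h => (hadj x).ne (congrArg Subtype.val h).symm)
        (fun x h => by
          have h1 := hasym _ (hpos x)
          have h2 := hpos (next x)
          have : (⟨((next x).1, (next (next x)).1), hadj (next x)⟩ : D G)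
              = rev ⟨(x.1, (next x).1), hadj x⟩ := by
            apply Subtype.ext; simp [rev, h]
          rw [this] at h2
          omega)
      have hv' : Function.Injective (fun k => (v k).1) := Subtype.val_injective.comp hv
      have hadj' : ∀ k, G.Adj (v k).1 (v (cycSucc k)).1 := by
        intro k; rw [hsucc]; exact hadj _
      have hpos' : ∀ k, 0 < u ⟨((v k).1, (v (cycSucc k)).1), hadj' k⟩ := by
        intro k
        have : (⟨((v k).1, (v (cycSucc k)).1), hadj' k⟩ : D G)
            = ⟨((v k).1, (next (v k)).1), hadj _⟩ := by
          apply Subtype.ext; simp [hsucc]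
        rw [this]; exact hpos _
      refine key (cyc (fun k => (v k).1) hadj') (cycR (fun k => (v k).1) hadj') ?_ ?_ ?_
        (A_cyc _ _) (hJ n hn _ hv' _)
      · apply sum_single_le _ _ _ hpos'
        intro a b hab
        exact hv' (congrArg (fun x : D G => x.1.1) hab)
      · apply sum_single_le
        · intro a b hab
          exact hv' (congrArg (fun x : D G => x.1.2) hab)
        · intro k
          have := hrev ⟨((v k).1, (v (cycSucc k)).1), hadj' k⟩
          have h2 := hpos' k
          rw [← this] at h2
          exact h2
      · intro h0
        have := congrArg Finsupp.degree h0
        simp only [cyc, map_sum, Finsupp.degree_single, map_zero] at this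
        simp at this
        omega
    · push Not at hu
      have : u = w := by
        ext e
        have := hu e
        have := hu (rev e)
        have := hinl e
        omega
      rw [this, sub_self]; exact J.zero_mem

/-- The parametrization. -/
noncomputable def psi : MvPolynomial (D G) ℚ →ₐ[ℚ] MvPolynomial (Sym2 V ⊕ V) ℚ :=
  aeval (R := ℚ) (fun e : D G => X (Sum.inl s(e.1.1, e.1.2)) * X (Sum.inr e.1.1))

theorem psi_monomial (u : D G →₀ ℕ) (c : ℚ) : psi (monomial u c) = monomial (A u) c := by
  induction u using Finsupp.induction_linear generalizing c with
  | zero => simp [psi, monomial_zero']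
  | add f g hf hg =>
    have h1 : (monomial (f + g) c : MvPolynomial (D G) ℚ) = monomial f c * monomial g 1 := by
      rw [monomial_mul, mul_one]
    rw [h1, map_mul, hf, hg, map_add, monomial_mul, mul_one]
  | single e n =>
    rw [A_single, psi, aeval_monomial, Finsupp.prod_single_index (by simp), algebraMap_eq]
    have h1 : (X (Sum.inl s(e.1.1, e.1.2)) * X (Sum.inr e.1.1) : MvPolynomial (Sym2 V ⊕ V) ℚ)
        = monomial (wt e) 1 := by
      rw [X, X, monomial_mul, one_mul]; rfl
    rw [h1, monomial_pow, C_mul_monomial, one_pow, mul_one]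

theorem mem_of_psi_eq_zero [DecidableRel G.Adj] (J : Ideal (MvPolynomial (D G) ℚ))
    (hJ : ∀ u w : D G →₀ ℕ, A u = A w → monomial u (1 : ℚ) - monomial w 1 ∈ J)
    (P : MvPolynomial (D G) ℚ) (hP : psi P = 0) : P ∈ J := by
  let s : ((Sym2 V ⊕ V) →₀ ℕ) → (D G →₀ ℕ) := Function.invFun A
  have hs : ∀ u : D G →₀ ℕ, A (s (A u)) = A u := fun u => Function.invFun_eq ⟨u, rfl⟩
  let ρ : MvPolynomial (Sym2 V ⊕ V) ℚ →ₗ[ℚ] MvPolynomial (D G) ℚ :=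
    (basisMonomials (Sym2 V ⊕ V) ℚ).constr ℚ (fun d => monomial (s d) 1)
  have hρ : ∀ d c, ρ (monomial d c) = monomial (s d) c := by
    intro d c
    have : (monomial d c : MvPolynomial (Sym2 V ⊕ V) ℚ) = c • basisMonomials _ ℚ d := by
      simp [smul_monomial]
    rw [this, map_smul, Module.Basis.constr_basis, smul_monomial, smul_eq_mul, mul_one]
  have main : ∀ Q : MvPolynomial (D G) ℚ, Q - ρ (psi Q) ∈ J := by
    intro Q
    induction Q using MvPolynomial.induction_on' with
    | monomial u c =>
      rw [psi_monomial, hρ]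
      have h := J.mul_mem_left (C c) (hJ u (s (A u)) (hs u).symm)
      rwa [mul_sub, C_mul_monomial, C_mul_monomial, mul_one] at h
    | add p q hp hq =>
      have : p + q - ρ (psi (p + q)) = (p - ρ (psi p)) + (q - ρ (psi q)) := by
        rw [map_add, map_add]; ring
      rw [this]; exact J.add_mem hp hq
  have := main P
  rwa [hP, map_zero, sub_zero] at this

end QS

open MvPolynomial in
/-- Markov basis of the classical QS model on a graph: the
kernel of the ring map `p_{ij} ↦ x_{{i,j}}·c_i` (from the polynomial ring in
the doubled edge variables of a graph `G` to the polynomial ring in the edge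
variables `x` and vertex variables `c`) is generated by the cycle binomials
`Π_k p_{v_k v_{k+1}} − Π_k p_{v_{k+1} v_k}`, where `v_1,…,v_n` runs over all
cycles of `G`. -/
theorem classical_qs_toric_ideal_generated_by_cycle_binomials (I : ℕ)
    (G : SimpleGraph (Fin I)) [DecidableRel G.Adj] :
    RingHom.ker
      ((aeval (R := ℚ)
          (fun e : {e : Fin I × Fin I // G.Adj e.1 e.2} =>
            (X (Sum.inl s(e.1.1, e.1.2)) * X (Sum.inr e.1.1) :
              MvPolynomial (Sym2 (Fin I) ⊕ Fin I) ℚ))).toRingHom)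
    = Ideal.span
        { P : MvPolynomial {e : Fin I × Fin I // G.Adj e.1 e.2} ℚ |
          ∃ (n : ℕ) (_ : 3 ≤ n) (v : Fin n → Fin I),
            Function.Injective v ∧ (∀ k, G.Adj (v k) (v (cycSucc k))) ∧
            P = (∏ k : Fin n,
                  (fun i j => if h : G.Adj i j then (X ⟨(i, j), h⟩ :
                      MvPolynomial {e : Fin I × Fin I // G.Adj e.1 e.2} ℚ)
                    else 0) (v k) (v (cycSucc k)))
              - ∏ k : Fin n,
                  (fun i j => if h : G.Adj i j then (X ⟨(i, j), h⟩ :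
                      MvPolynomial {e : Fin I × Fin I // G.Adj e.1 e.2} ℚ)
                    else 0) (v (cycSucc k)) (v k) } := by
  have hprod : ∀ (n : ℕ) (v : Fin n → Fin I) (h : ∀ k, G.Adj (v k) (v (cycSucc k))),
      (∏ k : Fin n, (fun i j => if h : G.Adj i j then (X ⟨(i, j), h⟩ :
                      MvPolynomial {e : Fin I × Fin I // G.Adj e.1 e.2} ℚ)
                    else 0) (v k) (v (cycSucc k))) = monomial (QS.cyc v h) 1 := by
    intro n v h
    rw [QS.cyc, QS.monomial_cyc]
    refine Finset.prod_congr rfl fun k _ => ?_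
    simp only [dif_pos (h k)]
  have hprodR : ∀ (n : ℕ) (v : Fin n → Fin I) (h : ∀ k, G.Adj (v k) (v (cycSucc k))),
      (∏ k : Fin n, (fun i j => if h : G.Adj i j then (X ⟨(i, j), h⟩ :
                      MvPolynomial {e : Fin I × Fin I // G.Adj e.1 e.2} ℚ)
                    else 0) (v (cycSucc k)) (v k)) = monomial (QS.cycR v h) 1 := by
    intro n v h
    rw [QS.cycR, QS.monomial_cyc]
    refine Finset.prod_congr rfl fun k _ => ?_
    simp only [dif_pos (h k).symm]
  apply le_antisymm
  · intro P hP
    refine QS.mem_of_psi_eq_zero _ (fun u w h => ?_) P hP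
    refine QS.binomial_mem _ (fun n hn v hv hadj => ?_) _ u w rfl h
    apply Ideal.subset_span
    exact ⟨n, hn, v, hv, hadj, by rw [hprod n v hadj, hprodR n v hadj]⟩
  · rw [Ideal.span_le]
    rintro P ⟨n, hn, v, hv, hadj, rfl⟩
    rw [hprod n v hadj, hprodR n v hadj]
    change QS.psi _ = 0
    rw [map_sub, QS.psi_monomial, QS.psi_monomial, QS.A_cyc, sub_self]
end

section
/- (SI = MH ∩ QSI_t.) Let I ≥ 2, t ∈ [0,1], let s_1,…,s_I be positive reals, and let a = (a_1,…,a_I) be a real vector with 2 + (1−t)(a_i + a_j) > 0 for all i,j and such that 1 + (1+t)(a_i − a_j)/(2 + (1−t)(a_i + a_j)) ≥ 0 for all i ≠ j. Define p_{ii} = s_i² and p_{ij} = s_i·s_j·(1 + (1+t)(a_i − a_j)/(2 + (1−t)(a_i + a_j))) for i ≠ j. If p satisfies marginal homogeneity, i.e. p_{i+} = p_{+i} for all i = 1,…,I, then a_1 = a_2 = … = a_I and p_{ij} = s_i·s_j for all i,j; that is, p satisfies the symmetric independence model. Conversely, if all a_i are equal then p_{ij} = s_i s_j and p is marginally homogeneous.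 -/
/-- SI = MH ∩ QSI_t: for the quasisymmetric independence model
QSI_t with positive `s_i` and admissible `a`, marginal homogeneity forces all
`a_i` to be equal and `p_{ij} = s_i·s_j` (symmetric independence); conversely,
if all `a_i` are equal then `p_{ij} = s_i·s_j` and `p` is marginally
homogeneous. -/
theorem si_eq_MH_inter_QSI_t (I : ℕ) (hI : 2 ≤ I) (t : ℝ)
    (ht : t ∈ Set.Icc (0 : ℝ) 1)
    (s : Fin I → ℝ) (hs : ∀ i, 0 < s i)
    (a : Fin I → ℝ)
    (hden : ∀ i j, 0 < 2 + (1 - t) * (a i + a j))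
    (hfac : ∀ i j, i ≠ j →
      0 ≤ 1 + (1 + t) * (a i - a j) / (2 + (1 - t) * (a i + a j)))
    (p : Fin I → Fin I → ℝ)
    (hp : ∀ i j, p i j = if i = j then s i ^ 2
      else s i * s j * (1 + (1 + t) * (a i - a j) / (2 + (1 - t) * (a i + a j)))) :
    ((∀ i, (∑ j, p i j) = ∑ j, p j i) →
      (∀ i j, a i = a j) ∧ (∀ i j, p i j = s i * s j)) ∧
    ((∀ i j, a i = a j) →
      (∀ i j, p i j = s i * s j) ∧ ∀ i, (∑ j, p i j) = ∑ j, p j i) := by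
  have ht1 : 0 < 1 + t := by linarith [ht.1]
  have hp' : ∀ i j, p i j =
      s i * s j * (1 + (1 + t) * (a i - a j) / (2 + (1 - t) * (a i + a j))) := by
    intro i j
    rw [hp]
    split_ifs with h
    · subst h
      simp [sq]
    · rfl
  have key : (∀ i j, a i = a j) → ∀ i j, p i j = s i * s j := by
    intro h i j
    rw [hp', h i j]
    simp
  have hdiff : ∀ i j, p i j - p j i =
      2 * (s i * s j) * ((1 + t) * (a i - a j) / (2 + (1 - t) * (a i + a j))) := by
    intro i j
    rw [hp', hp', add_comm (a j) (a i)]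
    ring
  refine ⟨fun h => ?_, fun h => ⟨key h, fun i => ?_⟩⟩
  · have hall : ∀ i j, a i = a j := by
      haveI : Nonempty (Fin I) := ⟨⟨0, by omega⟩⟩
      obtain ⟨m, hm⟩ := Finite.exists_max a
      have hsum : ∑ j, (p m j - p j m) = 0 := by
        rw [Finset.sum_sub_distrib, h m, sub_self]
      have hnn : ∀ j ∈ Finset.univ, 0 ≤ p m j - p j m := by
        intro j _
        rw [hdiff]
        have h1 := mul_pos (hs m) (hs j)
        have h2 := sub_nonneg.2 (hm j)
        have h3 := hden m j
        exact mul_nonneg (by linarith) (div_nonneg (mul_nonneg ht1.le h2) h3.le)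
      have hz := (Finset.sum_eq_zero_iff_of_nonneg hnn).1 hsum
      have hma : ∀ j, a m = a j := by
        intro j
        have h0 := hz j (Finset.mem_univ j)
        rw [hdiff] at h0
        have h1 := (hs m).ne'
        have h2 := (hs j).ne'
        have h3 := (hden m j).ne'
        have h4 := ht1.ne'
        simp only [mul_eq_zero, div_eq_zero_iff, h1, h2, h3, h4, false_or, or_false,
          OfNat.ofNat_ne_zero] at h0
        linarith
      intro i j
      rw [← hma i, ← hma j]
    exact ⟨hall, key hall⟩
  · refine Finset.sum_congr rfl fun j _ => ?_
    rw [key h, key h, mul_comm]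
end

section
/- (MLE of the symmetric part.) Let I ≥ 1 and let n = (n_{ij}) be an I×I matrix of positive reals with total n_{++} = Σ_{i,j} n_{ij}. Among all symmetric I×I matrices s = (s_{ij}) with all entries positive and Σ_{i,j} s_{ij} = 1, the function s ↦ Σ_{i,j} n_{ij}·log(s_{ij}) attains its maximum uniquely at ŝ_{ij} = (n_{ij} + n_{ji})/(2·n_{++}). -/
/-- MLE of the symmetric part: among symmetric positive matrices
`s` with total sum 1, the function `s ↦ Σ n_{ij}·log s_{ij}` attains its
maximum uniquely at `ŝ_{ij} = (n_{ij} + n_{ji})/(2 n_{++})`. -/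
theorem mle_symmetric_part (I : ℕ) (hI : 1 ≤ I)
    (n : Fin I → Fin I → ℝ) (hn : ∀ i j, 0 < n i j)
    (N : ℝ) (hN : N = ∑ i, ∑ j, n i j)
    (shat : Fin I → Fin I → ℝ)
    (hshat : ∀ i j, shat i j = (n i j + n j i) / (2 * N)) :
    (∀ i j, shat i j = shat j i) ∧ (∀ i j, 0 < shat i j) ∧
    (∑ i, ∑ j, shat i j = 1) ∧
    ∀ s : Fin I → Fin I → ℝ,
      (∀ i j, s i j = s j i) → (∀ i j, 0 < s i j) → (∑ i, ∑ j, s i j = 1) →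
      (∑ i, ∑ j, n i j * Real.log (s i j))
          ≤ (∑ i, ∑ j, n i j * Real.log (shat i j)) ∧
      ((∑ i, ∑ j, n i j * Real.log (s i j))
          = (∑ i, ∑ j, n i j * Real.log (shat i j)) → s = shat) := by
  have hne : Nonempty (Fin I) := ⟨⟨0, hI⟩⟩
  have hNpos : 0 < N := by
    rw [hN]
    exact Finset.sum_pos (fun i _ => Finset.sum_pos (fun j _ => hn i j) Finset.univ_nonempty)
      Finset.univ_nonempty
  have hsym : ∀ i j, shat i j = shat j i := by
    intro i j
    rw [hshat, hshat, add_comm]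
  have hpos : ∀ i j, 0 < shat i j := by
    intro i j
    rw [hshat]
    have := hn i j
    have := hn j i
    positivity
  have key : ∀ f : Fin I → Fin I → ℝ, (∀ i j, f i j = f j i) →
      ∑ i, ∑ j, n i j * f i j = N * ∑ i, ∑ j, shat i j * f i j := by
    intro f hf
    have h1 : ∑ i, ∑ j, n j i * f i j = ∑ i, ∑ j, n i j * f i j := by
      rw [Finset.sum_comm]
      refine Finset.sum_congr rfl fun i _ => Finset.sum_congr rfl fun j _ => ?_
      rw [hf]
    have h2 : N * ∑ i, ∑ j, shat i j * f i j
        = (∑ i, ∑ j, n i j * f i j + ∑ i, ∑ j, n j i * f i j) / 2 := by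
      simp only [← Finset.sum_add_distrib, Finset.mul_sum, Finset.sum_div]
      refine Finset.sum_congr rfl fun i _ => Finset.sum_congr rfl fun j _ => ?_
      rw [hshat]
      field_simp
    rw [h2, h1]
    ring
  have hsum : ∑ i, ∑ j, shat i j = 1 := by
    have h := key (fun _ _ => 1) (fun _ _ => rfl)
    simp only [mul_one] at h
    rw [← hN] at h
    exact mul_left_cancel₀ hNpos.ne' (by rw [← h, mul_one])
  refine ⟨hsym, hpos, hsum, ?_⟩
  intro s hs hsp hs1
  have hlog : ∀ i j, s i j ≠ shat i j →
      0 < (s i j - shat i j) - (shat i j * Real.log (s i j) - shat i j * Real.log (shat i j)) := by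
    intro i j hij
    have hp := hpos i j
    have h := Real.log_lt_sub_one_of_pos (div_pos (hsp i j) hp)
      (fun h => hij ((div_eq_one_iff_eq hp.ne').1 h))
    rw [Real.log_div (hsp i j).ne' hp.ne'] at h
    have h' := mul_lt_mul_of_pos_left h hp
    have e : shat i j * (s i j / shat i j - 1) = s i j - shat i j := by field_simp
    rw [e] at h'
    linarith
  have hD : ∀ i j,
      0 ≤ (s i j - shat i j) - (shat i j * Real.log (s i j) - shat i j * Real.log (shat i j)) := by
    intro i j
    by_cases h : s i j = shat i j
    · rw [h]; simp
    · exact (hlog i j h).le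
  have hDsum : ∑ i, ∑ j, ((s i j - shat i j)
        - (shat i j * Real.log (s i j) - shat i j * Real.log (shat i j)))
      = ∑ i, ∑ j, shat i j * Real.log (shat i j) - ∑ i, ∑ j, shat i j * Real.log (s i j) := by
    simp only [Finset.sum_sub_distrib]
    rw [hs1, hsum]
    ring
  rw [key (fun i j => Real.log (s i j)) (fun i j => by rw [hs]),
    key (fun i j => Real.log (shat i j)) (fun i j => by rw [hsym])]
  constructor
  · refine mul_le_mul_of_nonneg_left ?_ hNpos.le
    have := Finset.sum_nonneg (s := Finset.univ)
      (fun i _ => Finset.sum_nonneg (s := Finset.univ) (fun j _ => hD i j))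
    linarith
  · intro h
    have h := mul_left_cancel₀ hNpos.ne' h
    rw [h, sub_self] at hDsum
    funext i j
    by_contra hij
    have h1 := (Finset.sum_eq_zero_iff_of_nonneg
      (fun i _ => Finset.sum_nonneg (fun j _ => hD i j))).1 hDsum i (Finset.mem_univ _)
    have h2 := (Finset.sum_eq_zero_iff_of_nonneg (fun j _ => hD i j)).1 h1 j (Finset.mem_univ _)
    exact (hlog i j hij).ne' h2
end

section
/- (QS_t is closest to symmetry in φ_t-divergence.) Fix t ∈ (0,1), let φ_t(u) = f_t(u) − f_t(1) − f_t′(1)(u−1) with f_t(u) = (u + 2t/(1−t))·log(u + 2t/(1−t)), and for positive I×I tables q, s define D_{φ_t}(q, s) = Σ_{i,j} s_{ij}·φ_t(q_{ij}/s_{ij}). Let s = (s_{ij}) be a symmetric I×I matrix with positive entries summing to 1, let a = (a_1,…,a_I) be reals with 2 + (1−t)(a_i + a_j) > 0 for all i,j, and define the QS_t table p by p_{ij} = s_{ij}·(1 + (1+t)(a_i − a_j)/(2 + (1−t)(a_i + a_j))); assume all p_{ij} > 0. Then for every I×I table q with q_{ij} > 0, satisfying q_{ij} + q_{ji} = 2·s_{ij}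 for all i,j and having the same row margins as p (q_{i+} = p_{i+} for all i), one has D_{φ_t}(q, s) ≥ D_{φ_t}(p, s). That is, among all tables with the given symmetric pairwise sums and the given row margins, the QS_t table minimizes the φ_t-divergence from the symmetric table s. -/
lemma aux_xlogx (x y : ℝ) (hx : 0 < x) (hy : 0 < y) :
    (Real.log x + 1) * (y - x) ≤ y * Real.log y - x * Real.log x := by
  have h := Real.log_le_sub_one_of_pos (div_pos hx hy)
  rw [Real.log_div hx.ne' hy.ne'] at h
  have h2 := mul_le_mul_of_nonneg_left h hy.le
  have h3 : y * (x / y - 1) = x - y := by field_simp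
  rw [h3] at h2
  nlinarith

/-- QS_t is closest to symmetry in φ_t-divergence: fix
`t ∈ (0,1)` and let `φ_t(u) = f_t(u) − f_t(1) − f_t′(1)(u−1)` with
`f_t(u) = (u + 2t/(1−t))·log(u + 2t/(1−t))`. Let `s` be a positive symmetric
probability table and `p` the QS_t table built from `s` and parameters `a`.
Then every positive table `q` with `q_{ij} + q_{ji} = 2 s_{ij}` and the same
row margins as `p` satisfies `D_{φ_t}(q, s) ≥ D_{φ_t}(p, s)`. -/
theorem qs_t_minimizes_phi_divergence (I : ℕ) (hI : 2 ≤ I)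
    (t : ℝ) (ht : t ∈ Set.Ioo (0 : ℝ) 1)
    (f φ : ℝ → ℝ)
    (hf : ∀ u, f u = (u + 2 * t / (1 - t)) * Real.log (u + 2 * t / (1 - t)))
    (hφ : ∀ u, φ u = f u - f 1 - deriv f 1 * (u - 1))
    (s : Fin I → Fin I → ℝ)
    (hssymm : ∀ i j, s i j = s j i)
    (hspos : ∀ i j, 0 < s i j)
    (hssum : ∑ i, ∑ j, s i j = 1)
    (a : Fin I → ℝ)
    (hden : ∀ i j, 0 < 2 + (1 - t) * (a i + a j))
    (p : Fin I → Fin I → ℝ)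
    (hp : ∀ i j, p i j
      = s i j * (1 + (1 + t) * (a i - a j) / (2 + (1 - t) * (a i + a j))))
    (hppos : ∀ i j, 0 < p i j)
    (q : Fin I → Fin I → ℝ)
    (hqpos : ∀ i j, 0 < q i j)
    (hqpair : ∀ i j, q i j + q j i = 2 * s i j)
    (hqmarg : ∀ i, (∑ j, q i j) = ∑ j, p i j) :
    (∑ i, ∑ j, s i j * φ (p i j / s i j))
      ≤ ∑ i, ∑ j, s i j * φ (q i j / s i j) := by
  obtain ⟨ht0, ht1⟩ := ht
  have h1t : 0 < 1 - t := by linarith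
  have hx : ∀ i, 0 < 1 + (1 - t) * a i := fun i => by
    have := hden i i
    nlinarith
  have hc : 0 < 2 * t / (1 - t) := by positivity
  set c := 2 * t / (1 - t) with hcdef
  set α : Fin I → ℝ := fun i => Real.log (1 + (1 - t) * a i) with hα
  set γ : Fin I → Fin I → ℝ := fun i j =>
    Real.log (2 * (1 + t) / (1 - t)) - Real.log (2 + (1 - t) * (a i + a j)) + 1 - deriv f 1 with hγ
  have hγs : ∀ i j, γ i j = γ j i := fun i j => by
    simp only [hγ, add_comm (a i) (a j)]
  have hlog : ∀ i j, Real.log (p i j / s i j + c) + 1 - deriv f 1 = α i + γ i j := fun i j => by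
    have hs := hspos i j
    have hd := hden i j
    have e : p i j / s i j + c
        = (2 * (1 + t) / (1 - t)) * (1 + (1 - t) * a i) / (2 + (1 - t) * (a i + a j)) := by
      rw [hp, hcdef, mul_div_cancel_left₀ _ hs.ne']
      field_simp
      ring
    have h2 : 0 < 2 * (1 + t) / (1 - t) := by positivity
    rw [e, Real.log_div (mul_pos h2 (hx i)).ne' hd.ne', Real.log_mul h2.ne' (hx i).ne']
    simp only [hα, hγ]
    ring
  have key : ∀ i j, s i j * φ (p i j / s i j) + (q i j - p i j) * (α i + γ i j)
      ≤ s i j * φ (q i j / s i j) := fun i j => by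
    have hs := hspos i j
    have hP := div_pos (hppos i j) hs
    have hQ := div_pos (hqpos i j) hs
    have h := aux_xlogx (p i j / s i j + c) (q i j / s i j + c) (by linarith) (by linarith)
    have e : q i j - p i j = s i j * (q i j / s i j - p i j / s i j) := by field_simp
    rw [← hlog, e, hφ, hφ, hf (p i j / s i j), hf (q i j / s i j), mul_assoc, ← mul_add]
    apply mul_le_mul_of_nonneg_left _ hs.le
    linarith
  have hppair : ∀ i j, p i j + p j i = 2 * s i j := fun i j => by
    have hd := hden i j
    rw [hp i j, hp j i, hssymm j i, add_comm (a j) (a i)]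
    field_simp
    ring
  have z1 : ∑ i, ∑ j, (q i j - p i j) * α i = 0 := by
    apply Finset.sum_eq_zero
    intro i _
    rw [← Finset.sum_mul, Finset.sum_sub_distrib, hqmarg, sub_self, zero_mul]
  have z2 : ∑ i, ∑ j, (q i j - p i j) * γ i j = 0 := by
    have h : ∑ i, ∑ j, (q i j - p i j) * γ i j = - ∑ i, ∑ j, (q i j - p i j) * γ i j := by
      conv_lhs => rw [Finset.sum_comm]
      rw [← Finset.sum_neg_distrib]
      refine Finset.sum_congr rfl fun i _ => ?_
      rw [← Finset.sum_neg_distrib]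
      refine Finset.sum_congr rfl fun j _ => ?_
      have e : q j i - p j i = -(q i j - p i j) := by
        linarith [hqpair i j, hppair i j]
      rw [e, hγs j i, neg_mul]
    linarith
  have hsum := Finset.sum_le_sum fun i (_ : i ∈ Finset.univ) =>
    Finset.sum_le_sum fun j (_ : j ∈ Finset.univ) => key i j
  simp only [mul_add, Finset.sum_add_distrib] at hsum
  rw [z1, z2] at hsum
  linarith
end
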